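/- There is a universal constant C > 0 such that the meta MWU algorithm over kernelized MWU base learners achieves, for every d ≥ 2, T ≥ 1, every sequence of losses ℓ_1,…,ℓ_T ∈ [0,1]^d, every φ ∈ S and every q ∈ Q_φ: Reg(φ) = Σ_{t=1}^T ⟨p_t − φ^T p_t, ℓ_t⟩ ≤ C·(√(T·KL(q,π)) + √(T·(1 + log(1 + log d)))). In particular (taking q the point mass at φ ∈ Φ_b and using log(1/π(φ)) ≤ 2 + 2 c_φ log d), Reg(φ) ≤ C'·(√((1 + c_φ log d)·T) + √(T·(1 + log(1 + log d)))) for all φ ∈ S, for a universal constant C'. -/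

import Mathlib

open Finset

/-- The binary row-stochastic matrix associated with a map `f : [d] → [d]`. -/
def toMat (d : ℕ) (f : Fin d → Fin d) : Matrix (Fin d) (Fin d) ℝ :=
  fun i j => if f i = j then 1 else 0

/-- The set `Φ_b` of binary row-stochastic `d × d` matrices. -/
noncomputable def PhiB (d : ℕ) : Finset (Matrix (Fin d) (Fin d) ℝ) := by
  classical exact Finset.image (toMat d) Finset.univ

/-- A matrix is row-stochastic if every row lies in the simplex. -/
def RowStochastic {d : ℕ} (φ : Matrix (Fin d) (Fin d) ℝ) : Prop :=
  ∀ i, (∀ j, 0 ≤ φ i j) ∧ ∑ j, φ i j = 1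

/-- A vector lies in the probability simplex `Δ(d)`. -/
def InSimplex (d : ℕ) (p : Fin d → ℝ) : Prop :=
  (∀ i, 0 ≤ p i) ∧ ∑ i, p i = 1

/-- The `ψ`-induced weight of `φ`: `π_ψ(φ) = ∏ i ⟨ψ_{i:}, φ_{i:}⟩`. -/
noncomputable def piInd {d : ℕ} (ψ φ : Matrix (Fin d) (Fin d) ℝ) : ℝ :=
  ∏ i, ∑ j, ψ i j * φ i j

/-- `ψ^k = ((d-2)/(d-1))·1 e_k^T + (1/(d(d-1)))·1 1^T`. -/
noncomputable def psiK (d : ℕ) (k : Fin d) : Matrix (Fin d) (Fin d) ℝ :=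
  fun _ j => ((d : ℝ) - 2) / ((d : ℝ) - 1) * (if j = k then 1 else 0) + 1 / ((d : ℝ) * ((d : ℝ) - 1))

/-- `ψ^{d+1} = ((d-2)/(d-1))·I + (1/(d(d-1)))·1 1^T`. -/
noncomputable def psiSelf (d : ℕ) : Matrix (Fin d) (Fin d) ℝ :=
  fun i j => ((d : ℝ) - 2) / ((d : ℝ) - 1) * (if i = j then 1 else 0) + 1 / ((d : ℝ) * ((d : ℝ) - 1))

/-- The special prior `π = (1/(2d)) Σ_k π_{ψ^k} + (1/2) π_{ψ^{d+1}}`. -/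
noncomputable def priorPi (d : ℕ) (φ : Matrix (Fin d) (Fin d) ℝ) : ℝ :=
  1 / (2 * d) * ∑ k : Fin d, piInd (psiK d k) φ + 1 / 2 * piInd (psiSelf d) φ

/-- `d^self_φ`: the number of indices `i` whose row equals `e_i^T`. -/
noncomputable def dSelf {d : ℕ} (φ : Matrix (Fin d) (Fin d) ℝ) : ℕ :=
  Nat.card {i : Fin d // φ i = fun j => if j = i then (1 : ℝ) else 0}

/-- `d^unif_φ`: the maximum multiplicity in the multiset of rows of `φ`. -/
noncomputable def dUnif {d : ℕ} (φ : Matrix (Fin d) (Fin d) ℝ) : ℕ :=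
  Finset.univ.sup fun i : Fin d => Nat.card {j : Fin d // φ j = φ i}

/-- Complexity measure for binary row-stochastic matrices. -/
noncomputable def cB {d : ℕ} (φ : Matrix (Fin d) (Fin d) ℝ) : ℕ :=
  min (d - dSelf φ) (d - dUnif φ + 1)

/-- `Q_φ`: distributions over `Φ_b` (indexed by maps `f : [d] → [d]`) averaging to `φ`. -/
def QSet (d : ℕ) (φ : Matrix (Fin d) (Fin d) ℝ) : Set ((Fin d → Fin d) → ℝ) :=
  {q | (∀ f, 0 ≤ q f) ∧ (∑ f, q f = 1) ∧ ∀ i j, ∑ f, q f * toMat d f i j = φ i j}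

/-- Extended complexity measure `c_φ = inf_{q ∈ Q_φ} E_{φ'∼q}[c_{φ'}]`. -/
noncomputable def cGen (d : ℕ) (φ : Matrix (Fin d) (Fin d) ℝ) : ℝ :=
  sInf ((fun q => ∑ f : Fin d → Fin d, q f * (cB (toMat d f) : ℝ)) '' QSet d φ)

/-- Matrix inner product `⟨φ, p ℓ^T⟩`. -/
noncomputable def lossInner {d : ℕ} (φ : Matrix (Fin d) (Fin d) ℝ) (p ℓ : Fin d → ℝ) : ℝ :=
  ∑ i, ∑ j, φ i j * (p i * ℓ j)

/-- The mean matrix `E_{f∼q}[φ_f]` of a weight vector over binary matrices. -/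
noncomputable def mixMat (d : ℕ) (q : (Fin d → Fin d) → ℝ) : Matrix (Fin d) (Fin d) ℝ :=
  fun i j => ∑ f, q f * toMat d f i j

/-- KL divergence of `q` (a distribution over `Φ_b`, indexed by maps) from the prior `π`. -/
noncomputable def klPrior (d : ℕ) (q : (Fin d → Fin d) → ℝ) : ℝ :=
  ∑ f, q f * Real.log (q f / priorPi d (toMat d f))

/-- The kernel `K(B,A) = Σ_{φ∈Φ_b} π(φ) Π_{i,j : φ_{ij}=1} B_{ij} A_{ij}`. -/
noncomputable def kernelK (d : ℕ) (B A : Matrix (Fin d) (Fin d) ℝ) : ℝ := by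
  classical exact
    ∑ φ ∈ PhiB d, priorPi d φ * ∏ i, ∏ j, if φ i j = 1 then B i j * A i j else 1

theorem exp_quad (x : ℝ) (hx : 0 ≤ x) : Real.exp (-x) ≤ 1 - x + x ^ 2 / 2 := by
  have h := Real.quadratic_le_exp_of_nonneg hx
  have h4 : 1 ≤ (1 - x + x ^ 2 / 2) * (1 + x + x ^ 2 / 2) := by
    nlinarith [sq_nonneg (x ^ 2)]
  have hpos : 0 ≤ 1 - x + x ^ 2 / 2 := by nlinarith [sq_nonneg (x - 1)]
  rw [Real.exp_neg, inv_le_iff_one_le_mul₀ (Real.exp_pos x)]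
  exact h4.trans (mul_le_mul_of_nonneg_left h hpos)

/-- Per-expert MWU bound. -/
theorem mwu_core {ι : Type*} (s : Finset ι) (hs : s.Nonempty) (T : ℕ) (η : ℝ) (hη : 0 < η)
    (v L : ℕ → ι → ℝ)
    (hL : ∀ t ∈ Finset.Icc 1 T, ∀ i ∈ s, 0 ≤ L t i ∧ L t i ≤ 1)
    (h1 : ∀ i ∈ s, 0 < v 1 i) (hsum : ∑ i ∈ s, v 1 i = 1)
    (hup : ∀ t ∈ Finset.Icc 1 T, ∀ i ∈ s, v (t + 1) i =
      v t i * Real.exp (-η * L t i) / ∑ j ∈ s, v t j * Real.exp (-η * L t j)) :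
    ∀ n ≤ T, (∀ i ∈ s, 0 < v (n + 1) i) ∧ ∑ i ∈ s, v (n + 1) i = 1 ∧
      ∀ i ∈ s, η * ∑ t ∈ Finset.Icc 1 n, (∑ j ∈ s, v t j * L t j - L t i) ≤
        Real.log (v (n + 1) i) - Real.log (v 1 i) + η ^ 2 * n / 2 := by
  intro n
  induction n with
  | zero => intro _; refine ⟨h1, hsum, ?_⟩; intro i hi; simp
  | succ n ih =>
    intro hn
    obtain ⟨hpos, hs1, hreg⟩ := ih (by omega)
    have hmem : n + 1 ∈ Finset.Icc 1 T := by simp; omega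
    have hZ : 0 < ∑ j ∈ s, v (n + 1) j * Real.exp (-η * L (n + 1) j) :=
      Finset.sum_pos (fun j hj => mul_pos (hpos j hj) (Real.exp_pos _)) hs
    set Z := ∑ j ∈ s, v (n + 1) j * Real.exp (-η * L (n + 1) j) with hZdef
    have hZle : Z ≤ 1 - η * ∑ j ∈ s, v (n + 1) j * L (n + 1) j + η ^ 2 / 2 := by
      calc Z ≤ ∑ j ∈ s, v (n + 1) j * (1 - η * L (n + 1) j + η ^ 2 / 2) := by
            refine Finset.sum_le_sum fun j hj => mul_le_mul_of_nonneg_left ?_ (hpos j hj).le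
            obtain ⟨l0, l1⟩ := hL _ hmem j hj
            have h := exp_quad (η * L (n + 1) j) (by positivity)
            have h' : (η * L (n + 1) j) ^ 2 ≤ η ^ 2 := by
              rw [mul_pow]
              have : L (n + 1) j ^ 2 ≤ 1 := by nlinarith
              nlinarith [sq_nonneg η]
            rw [neg_mul]; linarith
        _ = 1 - η * ∑ j ∈ s, v (n + 1) j * L (n + 1) j + η ^ 2 / 2 := by
            have e : ∀ j ∈ s, v (n + 1) j * (1 - η * L (n + 1) j + η ^ 2 / 2) =
                (1 + η ^ 2 / 2) * v (n + 1) j - η * (v (n + 1) j * L (n + 1) j) := by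
              intro j _; ring
            rw [Finset.sum_congr rfl e, Finset.sum_sub_distrib, ← Finset.mul_sum,
              ← Finset.mul_sum, hs1]
            ring
    refine ⟨?_, ?_, ?_⟩
    · intro i hi
      rw [hup _ hmem i hi]
      exact div_pos (mul_pos (hpos i hi) (Real.exp_pos _)) hZ
    · rw [Finset.sum_congr rfl (hup _ hmem), ← Finset.sum_div]
      exact div_self hZ.ne'
    · intro i hi
      have hlog : Real.log (v (n + 1 + 1) i) =
          Real.log (v (n + 1) i) - η * L (n + 1) i - Real.log Z := by
        rw [hup _ hmem i hi, Real.log_div (mul_pos (hpos i hi) (Real.exp_pos _)).ne' hZ.ne',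
          Real.log_mul (hpos i hi).ne' (Real.exp_pos _).ne', Real.log_exp]
        ring
      have hlz := Real.log_le_sub_one_of_pos hZ
      rw [Finset.sum_Icc_succ_top (by omega), mul_add, hlog]
      have := hreg i hi
      push_cast
      linarith

theorem gibbs_term (u v : ℝ) (hu : 0 ≤ u) (hv : 0 < v) : u * Real.log v ≤ u * Real.log u + (v - u) := by
  rcases hu.eq_or_lt with h | h
  · subst h; simp; exact hv.le
  · have := Real.log_le_sub_one_of_pos (div_pos hv h)
    rw [Real.log_div hv.ne' h.ne'] at this
    have h2 := mul_le_mul_of_nonneg_left this hu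
    have : u * (v / u - 1) = v - u := by field_simp
    linarith

theorem mwu_kl {ι : Type*} (s : Finset ι) (hs : s.Nonempty) (T : ℕ) (η : ℝ) (hη : 0 < η)
    (v L : ℕ → ι → ℝ)
    (hL : ∀ t ∈ Finset.Icc 1 T, ∀ i ∈ s, 0 ≤ L t i ∧ L t i ≤ 1)
    (h1 : ∀ i ∈ s, 0 < v 1 i) (hsum : ∑ i ∈ s, v 1 i = 1)
    (hup : ∀ t ∈ Finset.Icc 1 T, ∀ i ∈ s, v (t + 1) i =
      v t i * Real.exp (-η * L t i) / ∑ j ∈ s, v t j * Real.exp (-η * L t j))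
    (u : ι → ℝ) (hu : ∀ i ∈ s, 0 ≤ u i) (hu1 : ∑ i ∈ s, u i = 1) :
    ∑ t ∈ Finset.Icc 1 T, (∑ j ∈ s, v t j * L t j - ∑ i ∈ s, u i * L t i) ≤
      (∑ i ∈ s, u i * Real.log (u i / v 1 i)) / η + η * T / 2 := by
  obtain ⟨hpos, hs1, hreg⟩ := mwu_core s hs T η hη v L hL h1 hsum hup T le_rfl
  have key : η * ∑ t ∈ Finset.Icc 1 T, (∑ j ∈ s, v t j * L t j - ∑ i ∈ s, u i * L t i) ≤
      ∑ i ∈ s, u i * Real.log (u i / v 1 i) + η ^ 2 * T / 2 := by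
    calc η * ∑ t ∈ Finset.Icc 1 T, (∑ j ∈ s, v t j * L t j - ∑ i ∈ s, u i * L t i)
        = ∑ i ∈ s, u i * (η * ∑ t ∈ Finset.Icc 1 T, (∑ j ∈ s, v t j * L t j - L t i)) := by
          simp only [Finset.mul_sum]
          rw [Finset.sum_comm]
          refine Finset.sum_congr rfl fun t _ => ?_
          have e : ∀ i ∈ s, u i * (η * (∑ j ∈ s, v t j * L t j - L t i)) =
            η * (∑ j ∈ s, v t j * L t j) * u i - η * (u i * L t i) := by intro i _; ring
          rw [Finset.sum_congr rfl e, Finset.sum_sub_distrib, ← Finset.mul_sum, hu1,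
            ← Finset.mul_sum]
          ring
      _ ≤ ∑ i ∈ s, (u i * Real.log (u i / v 1 i) + (v (T + 1) i - u i)
            + (η ^ 2 * T / 2) * u i) := by
          refine Finset.sum_le_sum fun i hi => ?_
          refine (mul_le_mul_of_nonneg_left (hreg i hi) (hu i hi)).trans ?_
          have hg := gibbs_term (u i) (v (T + 1) i) (hu i hi) (hpos i hi)
          rcases (hu i hi).eq_or_lt with h | h
          · rw [← h]; simp; exact (hpos i hi).le
          · rw [Real.log_div h.ne' (h1 i hi).ne']; linarith
      _ = _ := by
          rw [Finset.sum_add_distrib, Finset.sum_add_distrib, Finset.sum_sub_distrib, hs1, hu1,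
            ← Finset.mul_sum, hu1]
          ring
  have : ∑ t ∈ Finset.Icc 1 T, (∑ j ∈ s, v t j * L t j - ∑ i ∈ s, u i * L t i) ≤
      (∑ i ∈ s, u i * Real.log (u i / v 1 i) + η ^ 2 * T / 2) / η := by
    rw [le_div_iff₀ hη]; linarith
  refine this.trans (le_of_eq ?_)
  field_simp

theorem mwu_point {ι : Type*} (s : Finset ι) (hs : s.Nonempty) (T : ℕ) (η : ℝ) (hη : 0 < η)
    (v L : ℕ → ι → ℝ)
    (hL : ∀ t ∈ Finset.Icc 1 T, ∀ i ∈ s, 0 ≤ L t i ∧ L t i ≤ 1)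
    (h1 : ∀ i ∈ s, 0 < v 1 i) (hsum : ∑ i ∈ s, v 1 i = 1)
    (hup : ∀ t ∈ Finset.Icc 1 T, ∀ i ∈ s, v (t + 1) i =
      v t i * Real.exp (-η * L t i) / ∑ j ∈ s, v t j * Real.exp (-η * L t j))
    (i : ι) (hi : i ∈ s) :
    ∑ t ∈ Finset.Icc 1 T, (∑ j ∈ s, v t j * L t j - L t i) ≤
      (- Real.log (v 1 i)) / η + η * T / 2 := by
  obtain ⟨hpos, hs1, hreg⟩ := mwu_core s hs T η hη v L hL h1 hsum hup T le_rfl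
  have h := hreg i hi
  have hle : v (T + 1) i ≤ 1 := by
    rw [← hs1]; exact Finset.single_le_sum (fun j hj => (hpos j hj).le) hi
  have hlog := Real.log_nonpos (hpos i hi).le hle
  have : ∑ t ∈ Finset.Icc 1 T, (∑ j ∈ s, v t j * L t j - L t i) ≤
      (- Real.log (v 1 i) + η ^ 2 * T / 2) / η := by
    rw [le_div_iff₀ hη]; linarith
  refine this.trans (le_of_eq ?_)
  field_simp

theorem piInd_toMat (d : ℕ) (ψ : Matrix (Fin d) (Fin d) ℝ) (f : Fin d → Fin d) :
    piInd ψ (toMat d f) = ∏ i, ψ i (f i) := by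
  simp [piInd, toMat]

theorem sum_prod_rows (d : ℕ) (ψ : Matrix (Fin d) (Fin d) ℝ) (h : ∀ i, ∑ j, ψ i j = 1) :
    ∑ f : Fin d → Fin d, ∏ i, ψ i (f i) = 1 := by
  have := Finset.prod_univ_sum (fun _ : Fin d => (Finset.univ : Finset (Fin d))) (fun i j => ψ i j)
  rw [Fintype.piFinset_univ] at this
  rw [← this]; simp [h]

theorem QSet_nonempty (d : ℕ) (φ : Matrix (Fin d) (Fin d) ℝ) (h : RowStochastic φ) :
    (QSet d φ).Nonempty := by
  refine ⟨fun f => ∏ i, φ i (f i), fun f => Finset.prod_nonneg fun i _ => (h i).1 _,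
    sum_prod_rows d φ fun i => (h i).2, ?_⟩
  intro i j
  have := Finset.prod_univ_sum (fun _ : Fin d => (Finset.univ : Finset (Fin d)))
    (fun a k => φ a k * (if a = i then (if k = j then (1:ℝ) else 0) else 1))
  rw [Fintype.piFinset_univ] at this
  have e : ∀ f : Fin d → Fin d, (∏ a, φ a (f a)) * toMat d f i j =
      ∏ a, (φ a (f a) * (if a = i then (if f a = j then (1:ℝ) else 0) else 1)) := by
    intro f
    rw [Finset.prod_mul_distrib]
    simp [toMat]
  rw [Finset.sum_congr rfl (fun f _ => e f), ← this, Finset.prod_eq_single i]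
  · simp
  · intro b _ hb; simp [hb, (h b).2]
  · simp

theorem psi_diag (d : ℕ) (hd : 2 ≤ d) :
    ((d : ℝ) - 2) / ((d : ℝ) - 1) + 1 / ((d : ℝ) * ((d : ℝ) - 1)) = ((d : ℝ) - 1) / d := by
  have : (2 : ℝ) ≤ d := by exact_mod_cast hd
  have h1 : (d : ℝ) - 1 ≠ 0 := by linarith
  have h2 : (d : ℝ) ≠ 0 := by linarith
  field_simp
  ring

theorem psi_rowsum (d : ℕ) (hd : 2 ≤ d) (k : Fin d) :
    ∑ j : Fin d, (((d : ℝ) - 2) / ((d : ℝ) - 1) * (if k = j then 1 else 0)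
      + 1 / ((d : ℝ) * ((d : ℝ) - 1))) = 1 := by
  have : (2 : ℝ) ≤ d := by exact_mod_cast hd
  have h1 : (d : ℝ) - 1 ≠ 0 := by linarith
  have h2 : (d : ℝ) ≠ 0 := by linarith
  rw [Finset.sum_add_distrib]
  simp only [mul_ite, mul_one, mul_zero, Finset.sum_ite_eq, Finset.mem_univ, if_true,
    Finset.sum_const, Finset.card_univ, Fintype.card_fin, nsmul_eq_mul]
  field_simp
  ring

theorem psiEntry_pos (d : ℕ) (hd : 2 ≤ d) (P : Prop) [Decidable P] :
    0 < ((d : ℝ) - 2) / ((d : ℝ) - 1) * (if P then 1 else 0) + 1 / ((d : ℝ) * ((d : ℝ) - 1)) := by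
  have : (2 : ℝ) ≤ d := by exact_mod_cast hd
  have h1 : 0 < (d : ℝ) - 1 := by linarith
  have h2 : 0 < (d : ℝ) := by linarith
  have h3 : 0 ≤ (d : ℝ) - 2 := by linarith
  have h4 : (0:ℝ) ≤ if P then 1 else 0 := by split_ifs <;> norm_num
  positivity

theorem neg_log_entry (d : ℕ) (hd : 2 ≤ d) (P : Prop) [Decidable P] :
    - Real.log (((d : ℝ) - 2) / ((d : ℝ) - 1) * (if P then 1 else 0)
      + 1 / ((d : ℝ) * ((d : ℝ) - 1))) ≤ 2 / d + (if P then 0 else 2 * Real.log d) := by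
  have : (2 : ℝ) ≤ d := by exact_mod_cast hd
  have h1 : 0 < (d : ℝ) - 1 := by linarith
  have h2 : 0 < (d : ℝ) := by linarith
  split_ifs
  · rw [mul_one, psi_diag d hd, ← Real.log_inv, inv_div, add_zero]
    refine (Real.log_le_sub_one_of_pos (by positivity)).trans ?_
    rw [div_sub_one h1.ne', div_le_div_iff₀ h1 h2]
    linarith
  · rw [mul_zero, zero_add, ← Real.log_inv, one_div, inv_inv, Real.log_mul h2.ne' h1.ne']
    have := Real.log_le_log h1 (by linarith : (d:ℝ) - 1 ≤ d)
    have : 0 ≤ 2 / (d:ℝ) := by positivity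
    linarith

theorem neg_log_prod (d : ℕ) (hd : 2 ≤ d) (P : Fin d → Prop) [DecidablePred P] :
    - Real.log (∏ i, (((d : ℝ) - 2) / ((d : ℝ) - 1) * (if P i then 1 else 0)
      + 1 / ((d : ℝ) * ((d : ℝ) - 1)))) ≤
      2 + 2 * Real.log d * ((d - (Finset.univ.filter P).card : ℕ) : ℝ) := by
  have h2 : (2 : ℝ) ≤ d := by exact_mod_cast hd
  rw [Real.log_prod (fun i _ => (psiEntry_pos d hd (P i)).ne'), ← Finset.sum_neg_distrib]
  refine (Finset.sum_le_sum fun i _ => neg_log_entry d hd (P i)).trans (le_of_eq ?_)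
  have hc : (Finset.univ.filter fun i => ¬ P i).card = d - (Finset.univ.filter P).card := by
    have := Finset.card_filter_add_card_filter_not (s := (Finset.univ : Finset (Fin d))) P
    simp only [Finset.card_univ, Fintype.card_fin] at this
    omega
  rw [Finset.sum_add_distrib]
  congr 1
  · simp; field_simp
  · rw [← hc, Finset.sum_ite]
    simp; ring

theorem prior_eq (d : ℕ) (f : Fin d → Fin d) : priorPi d (toMat d f) =
    1 / (2 * d) * ∑ k : Fin d, ∏ i, psiK d k i (f i) + 1 / 2 * ∏ i, psiSelf d i (f i) := by
  simp [priorPi, piInd_toMat]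

theorem prodK_pos (d : ℕ) (hd : 2 ≤ d) (k) (f : Fin d → Fin d) : 0 < ∏ i, psiK d k i (f i) :=
  Finset.prod_pos fun i _ => psiEntry_pos d hd (f i = k)

theorem prodS_pos (d : ℕ) (hd : 2 ≤ d) (f : Fin d → Fin d) : 0 < ∏ i, psiSelf d i (f i) :=
  Finset.prod_pos fun i _ => psiEntry_pos d hd (i = f i)

theorem prior_pos (d : ℕ) (hd : 2 ≤ d) (f : Fin d → Fin d) : 0 < priorPi d (toMat d f) := by
  rw [prior_eq]
  have h1 := prodS_pos d hd f
  have h2 : 0 ≤ ∑ k : Fin d, ∏ i, psiK d k i (f i) :=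
    Finset.sum_nonneg fun k _ => (prodK_pos d hd k f).le
  positivity

theorem prior_sum (d : ℕ) (hd : 2 ≤ d) : ∑ f, priorPi d (toMat d f) = 1 := by
  have h2 : (2 : ℝ) ≤ d := by exact_mod_cast hd
  simp only [prior_eq]
  rw [Finset.sum_add_distrib, ← Finset.mul_sum, ← Finset.mul_sum, Finset.sum_comm]
  have hS := sum_prod_rows d (psiSelf d) (fun i => psi_rowsum d hd i)
  have hK : ∀ k ∈ (Finset.univ : Finset (Fin d)), ∑ f : Fin d → Fin d, ∏ i, psiK d k i (f i) = 1 :=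
    fun k _ => sum_prod_rows d (psiK d k) (fun i => by
      have := psi_rowsum d hd k
      simpa [psiK, eq_comm] using this)
  rw [hS, Finset.sum_congr rfl hK]
  simp
  field_simp
  norm_num

theorem row_eq_iff (d : ℕ) (f : Fin d → Fin d) (i k : Fin d) :
    (toMat d f i = fun j => if k = j then (1:ℝ) else 0) ↔ f i = k := by
  constructor
  · intro h
    have := congrFun h k
    simp [toMat] at this
    exact this
  · intro h; funext j; simp [toMat, h]

theorem neg_log_prior (d : ℕ) (hd : 2 ≤ d) (f : Fin d → Fin d) :
    - Real.log (priorPi d (toMat d f)) ≤ 3 + 2 * Real.log d * (cB (toMat d f) : ℝ) := by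
  have h2 : (2 : ℝ) ≤ d := by exact_mod_cast hd
  have hl2 : Real.log 2 ≤ 1 := by have := Real.log_two_lt_d9; linarith
  have hld : 0 ≤ Real.log d := Real.log_nonneg (by linarith)
  have hS := prodS_pos d hd f
  have hKs : 0 ≤ ∑ k : Fin d, ∏ i, psiK d k i (f i) :=
    Finset.sum_nonneg fun k _ => (prodK_pos d hd k f).le
  have hself : dSelf (toMat d f) = (Finset.univ.filter fun i => i = f i).card := by
    unfold dSelf
    have e : ∀ i : Fin d, (toMat d f i = fun j => if j = i then (1:ℝ) else 0) ↔ i = f i := by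
      intro i
      have := row_eq_iff d f i i
      rw [eq_comm (a := i), ← this]
      simp only [eq_comm]
    rw [Nat.card_congr (Equiv.subtypeEquivRight e), Nat.card_eq_fintype_card,
      Fintype.card_subtype]
  obtain ⟨k, hk⟩ : ∃ k, dUnif (toMat d f) = (Finset.univ.filter fun i => f i = k).card := by
    have : NeZero d := ⟨by omega⟩
    obtain ⟨i, _, hi⟩ := Finset.exists_mem_eq_sup (Finset.univ : Finset (Fin d)) ⟨0, by simp⟩
      (fun i : Fin d => Nat.card {j : Fin d // toMat d f j = toMat d f i})
    refine ⟨f i, ?_⟩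
    unfold dUnif
    have e : ∀ j : Fin d, (toMat d f j = toMat d f i) ↔ f j = f i :=
      fun j => row_eq_iff d f j (f i)
    rw [hi, Nat.card_congr (Equiv.subtypeEquivRight e),
      Nat.card_eq_fintype_card, Fintype.card_subtype]
  have b1 : - Real.log (priorPi d (toMat d f)) ≤
      3 + 2 * Real.log d * ((d - dSelf (toMat d f) : ℕ) : ℝ) := by
    have hle : 1 / 2 * ∏ i, psiSelf d i (f i) ≤ priorPi d (toMat d f) := by
      rw [prior_eq]
      have : 0 ≤ 1 / (2 * (d:ℝ)) * ∑ k : Fin d, ∏ i, psiK d k i (f i) := by positivity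
      linarith
    have h := Real.log_le_log (by positivity) hle
    rw [Real.log_mul (by norm_num) hS.ne', one_div, Real.log_inv] at h
    have h3 : - Real.log (∏ i, psiSelf d i (f i)) ≤ _ := neg_log_prod d hd (fun i => i = f i)
    rw [hself]
    linarith
  have b2 : - Real.log (priorPi d (toMat d f)) ≤
      3 + 2 * Real.log d * ((d - dUnif (toMat d f) + 1 : ℕ) : ℝ) := by
    have hKp := prodK_pos d hd k f
    have hle : 1 / (2 * (d:ℝ)) * ∏ i, psiK d k i (f i) ≤ priorPi d (toMat d f) := by
      rw [prior_eq]
      have h1 : ∏ i, psiK d k i (f i) ≤ ∑ k : Fin d, ∏ i, psiK d k i (f i) :=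
        Finset.single_le_sum (f := fun k => ∏ i, psiK d k i (f i))
          (fun k _ => (prodK_pos d hd k f).le) (Finset.mem_univ k)
      have h2 : 1 / (2 * (d:ℝ)) * ∏ i, psiK d k i (f i) ≤
        1 / (2 * (d:ℝ)) * ∑ k : Fin d, ∏ i, psiK d k i (f i) :=
          mul_le_mul_of_nonneg_left h1 (by positivity)
      linarith
    have h := Real.log_le_log (by positivity) hle
    rw [Real.log_mul (by positivity) hKp.ne', one_div, Real.log_inv,
      Real.log_mul (by norm_num) (by positivity)] at h
    have h3 : - Real.log (∏ i, psiK d k i (f i)) ≤ _ := neg_log_prod d hd (fun i => f i = k)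
    rw [hk]
    push_cast
    linarith
  unfold cB
  rcases min_choice (d - dSelf (toMat d f)) (d - dUnif (toMat d f) + 1) with h | h <;> rw [h]
  · exact b1
  · exact b2

theorem kl_le (d : ℕ) (hd : 2 ≤ d) (q : (Fin d → Fin d) → ℝ) (h0 : ∀ f, 0 ≤ q f)
    (h1 : ∑ f, q f = 1) :
    klPrior d q ≤ 3 + 2 * Real.log d * ∑ f, q f * (cB (toMat d f) : ℝ) := by
  have : ∀ f ∈ (Finset.univ : Finset (Fin d → Fin d)),
      q f * Real.log (q f / priorPi d (toMat d f)) ≤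
      3 * q f + 2 * Real.log d * (q f * (cB (toMat d f) : ℝ)) := by
    intro f _
    have hn := mul_le_mul_of_nonneg_left (neg_log_prior d hd f) (h0 f)
    rcases (h0 f).eq_or_lt with h | h
    · simp [← h]
    · rw [Real.log_div h.ne' (prior_pos d hd f).ne']
      have hq : q f ≤ 1 := by
        rw [← h1]; exact Finset.single_le_sum (fun g _ => h0 g) (Finset.mem_univ f)
      have := mul_nonpos_of_nonneg_of_nonpos (h0 f) (Real.log_nonpos (h0 f) hq)
      linarith
  refine (Finset.sum_le_sum this).trans (le_of_eq ?_)
  rw [Finset.sum_add_distrib, ← Finset.mul_sum, ← Finset.mul_sum, h1]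
  ring

theorem kl_le_big (d : ℕ) (hd : 2 ≤ d) (q : (Fin d → Fin d) → ℝ) (h0 : ∀ f, 0 ≤ q f)
    (h1 : ∑ f, q f = 1) : klPrior d q ≤ 4 * 2 ^ (2 * Nat.clog 2 d) := by
  have h2 : (2 : ℝ) ≤ d := by exact_mod_cast hd
  have hld : 0 ≤ Real.log d := Real.log_nonneg (by linarith)
  have hld' : Real.log d ≤ d - 1 := Real.log_le_sub_one_of_pos (by linarith)
  have hE : ∑ f, q f * (cB (toMat d f) : ℝ) ≤ d := by
    calc _ ≤ ∑ f, q f * (d : ℝ) := by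
          refine Finset.sum_le_sum fun f _ => mul_le_mul_of_nonneg_left ?_ (h0 f)
          have : cB (toMat d f) ≤ d := (min_le_left _ _).trans (Nat.sub_le _ _)
          exact_mod_cast this
      _ = d := by rw [← Finset.sum_mul, h1, one_mul]
  have hp : (d : ℝ) ≤ 2 ^ Nat.clog 2 d := by exact_mod_cast Nat.le_pow_clog (by norm_num) d
  have hk := kl_le d hd q h0 h1
  have h3 : Real.log d * ∑ f, q f * (cB (toMat d f) : ℝ) ≤ Real.log d * d :=
    mul_le_mul_of_nonneg_left hE hld
  have h4 : (2:ℝ) ^ (2 * Nat.clog 2 d) = (2 ^ Nat.clog 2 d) ^ 2 := by rw [mul_comm, pow_mul]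
  rw [h4]
  nlinarith

theorem pick_h (K : ℝ) (hK : 2 ≤ K) (M : ℕ) (hM : 1 ≤ M) (hKM : K ≤ 4 * 2 ^ M) :
    ∃ h ∈ Finset.Icc 1 M, (2:ℝ) ^ h ≤ K ∧ K ≤ 4 * 2 ^ h := by
  induction M, hM using Nat.le_induction with
  | base => exact ⟨1, by simp, by simpa using hK, hKM⟩
  | succ n hn ih =>
    by_cases hc : (2:ℝ) ^ (n + 1) ≤ K
    · exact ⟨n + 1, by simp, hc, hKM⟩
    · obtain ⟨h, hh, h1, h2⟩ := ih (by
        rw [pow_succ] at hc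
        have : (0:ℝ) < 2 ^ n := by positivity
        linarith)
      exact ⟨h, by simp at hh ⊢; omega, h1, h2⟩

theorem tune (K : ℝ) (T M : ℕ) (hT : 1 ≤ T) (hM : 1 ≤ M) (hKM : K ≤ 4 * 2 ^ M) :
    ∃ h ∈ Finset.Icc 1 M, K / Real.sqrt ((2:ℝ) ^ h / T) + Real.sqrt ((2:ℝ) ^ h / T) * T / 2 ≤
      3 * Real.sqrt (T * K) + 3 * Real.sqrt T := by
  have hTr : (1:ℝ) ≤ T := by exact_mod_cast hT
  have hs : 0 < Real.sqrt T := Real.sqrt_pos.2 (by linarith)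
  have hss : Real.sqrt T * Real.sqrt T = T := Real.mul_self_sqrt (by linarith)
  have hform : ∀ h : ℕ, K / Real.sqrt ((2:ℝ) ^ h / T) + Real.sqrt ((2:ℝ) ^ h / T) * T / 2 =
      Real.sqrt T * (K / Real.sqrt (2 ^ h) + Real.sqrt (2 ^ h) / 2) := by
    intro h
    have hr : 0 < Real.sqrt ((2:ℝ) ^ h) := Real.sqrt_pos.2 (by positivity)
    rw [Real.sqrt_div (by positivity)]
    nth_rewrite 3 [← hss]
    field_simp
  have hT0 : Real.sqrt (T * K) = Real.sqrt T * Real.sqrt K := Real.sqrt_mul (by linarith) K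
  simp only [hform, hT0]
  suffices ∃ h ∈ Finset.Icc 1 M, K / Real.sqrt (2 ^ h) + Real.sqrt (2 ^ h) / 2 ≤
      3 * Real.sqrt K + 3 by
    obtain ⟨h, hh, hb⟩ := this
    refine ⟨h, hh, (mul_le_mul_of_nonneg_left hb hs.le).trans (le_of_eq (by ring))⟩
  rcases le_or_gt K 2 with hc | hc
  · refine ⟨1, by simp; omega, ?_⟩
    rw [pow_one]
    have h1 : 1 ≤ Real.sqrt (2:ℝ) := Real.one_le_sqrt.2 (by norm_num)
    have h2 : Real.sqrt (2:ℝ) ≤ 2 := Real.sqrt_le_iff.2 (by norm_num)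
    have h3 : K / Real.sqrt (2:ℝ) ≤ 2 := by
      rw [div_le_iff₀ (by linarith)]; linarith
    have := Real.sqrt_nonneg K
    linarith
  · obtain ⟨h, hh, h1, h2⟩ := pick_h K hc.le M hM hKM
    refine ⟨h, hh, ?_⟩
    have hr : 0 < Real.sqrt ((2:ℝ) ^ h) := Real.sqrt_pos.2 (by positivity)
    have hrr : Real.sqrt ((2:ℝ) ^ h) ≤ Real.sqrt K := Real.sqrt_le_sqrt h1
    have hkk : Real.sqrt K * Real.sqrt K = K := Real.mul_self_sqrt (by linarith)
    have h2r : Real.sqrt K ≤ 2 * Real.sqrt ((2:ℝ) ^ h) := by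
      rw [Real.sqrt_le_iff]
      refine ⟨by positivity, ?_⟩
      rw [mul_pow, Real.sq_sqrt (by positivity)]; linarith
    have h3 : K / Real.sqrt ((2:ℝ) ^ h) ≤ 2 * Real.sqrt K := by
      rw [div_le_iff₀ hr]
      nlinarith
    linarith [Real.sqrt_nonneg K]

theorem logM (d : ℕ) (hd : 2 ≤ d) : 0 < Real.log (2 * Nat.clog 2 d : ℝ) ∧
    Real.log (2 * Nat.clog 2 d : ℝ) ≤ 2 * (1 + Real.log (1 + Real.log d)) := by
  have h2 : (2 : ℝ) ≤ d := by exact_mod_cast hd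
  have hld : 0 ≤ Real.log d := Real.log_nonneg (by linarith)
  have hc : 1 ≤ Nat.clog 2 d := Nat.clog_pos (by norm_num) hd
  have hcr : (1:ℝ) ≤ Nat.clog 2 d := by exact_mod_cast hc
  refine ⟨Real.log_pos (by linarith), ?_⟩
  have hlt : 2 ^ (Nat.clog 2 d - 1) < d := Nat.pow_pred_clog_lt_self (by norm_num) hd
  have hl : Real.log ((2:ℝ) ^ (Nat.clog 2 d - 1)) ≤ Real.log d :=
    Real.log_le_log (by positivity) (by exact_mod_cast hlt.le)
  rw [Real.log_pow, Nat.cast_sub hc] at hl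
  have hl2 := Real.log_two_gt_d9
  have hl2' := Real.log_two_lt_d9
  have hcl : (Nat.clog 2 d : ℝ) ≤ 2 * (1 + Real.log d) := by
    push_cast at hl
    nlinarith
  have := Real.log_le_log (by linarith) (by linarith : (2 * Nat.clog 2 d : ℝ) ≤ 4 * (1 + Real.log d))
  have e4 : Real.log (4 * (1 + Real.log d)) =
      Real.log 2 + Real.log 2 + Real.log (1 + Real.log d) := by
    rw [Real.log_mul (by norm_num) (by linarith), show (4:ℝ) = 2 * 2 by norm_num,
      Real.log_mul (by norm_num) (by norm_num)]
  rw [e4] at this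
  have : 0 ≤ Real.log (1 + Real.log d) := Real.log_nonneg (by linarith)
  linarith

theorem lossInner_mix (d : ℕ) (q : (Fin d → Fin d) → ℝ) (p l : Fin d → ℝ) :
    lossInner (mixMat d q) p l = ∑ f, q f * lossInner (toMat d f) p l := by
  simp only [lossInner, mixMat, Finset.mul_sum, Finset.sum_mul]
  rw [Finset.sum_comm]
  rw [Finset.sum_comm]
  have : ∀ i : Fin d, ∑ j, ∑ f, q f * toMat d f i j * (p i * l j) =
      ∑ f, ∑ j, q f * (toMat d f i j * (p i * l j)) := by
    intro i
    rw [Finset.sum_comm]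
    simp only [mul_assoc]
  rw [Finset.sum_congr rfl (fun i _ => this i), Finset.sum_comm]

theorem lossInner_toMat (d : ℕ) (f : Fin d → Fin d) (p l : Fin d → ℝ) :
    lossInner (toMat d f) p l = ∑ i, p i * l (f i) := by
  simp [lossInner, toMat]

theorem lossInner_bd (d : ℕ) (f : Fin d → Fin d) (p l : Fin d → ℝ) (hp : InSimplex d p)
    (hl : ∀ i, 0 ≤ l i ∧ l i ≤ 1) :
    0 ≤ lossInner (toMat d f) p l ∧ lossInner (toMat d f) p l ≤ 1 := by
  rw [lossInner_toMat]
  refine ⟨Finset.sum_nonneg fun i _ => mul_nonneg (hp.1 i) (hl _).1, ?_⟩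
  rw [← hp.2]
  exact Finset.sum_le_sum fun i _ => mul_le_of_le_one_right (hp.1 i) (hl _).2

theorem lossInner_mix_bd (d : ℕ) (q : (Fin d → Fin d) → ℝ) (p l : Fin d → ℝ) (hp : InSimplex d p)
    (hl : ∀ i, 0 ≤ l i ∧ l i ≤ 1) (h0 : ∀ f, 0 ≤ q f) (h1 : ∑ f, q f = 1) :
    0 ≤ lossInner (mixMat d q) p l ∧ lossInner (mixMat d q) p l ≤ 1 := by
  rw [lossInner_mix]
  refine ⟨Finset.sum_nonneg fun f _ => mul_nonneg (h0 f) (lossInner_bd d f p l hp hl).1, ?_⟩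
  rw [← h1]
  exact Finset.sum_le_sum fun f _ => mul_le_of_le_one_right (h0 f) (lossInner_bd d f p l hp hl).2

theorem apply_eq_lossInner (d : ℕ) (φ : Matrix (Fin d) (Fin d) ℝ) (p l : Fin d → ℝ) :
    ∑ i, (∑ j, φ j i * p j) * l i = lossInner φ p l := by
  simp only [lossInner, Finset.sum_mul]
  rw [Finset.sum_comm]
  simp only [mul_assoc]

theorem lossInner_sum (d : ℕ) (s : Finset ℕ) (w : ℕ → ℝ) (A : ℕ → Matrix (Fin d) (Fin d) ℝ)
    (p l : Fin d → ℝ) :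
    lossInner (fun j i => ∑ h ∈ s, w h * A h j i) p l = ∑ h ∈ s, w h * lossInner (A h) p l := by
  simp only [lossInner, Finset.mul_sum, Finset.sum_mul]
  have : ∀ i : Fin d, ∑ j, ∑ h ∈ s, w h * A h i j * (p i * l j) =
      ∑ h ∈ s, ∑ j, w h * (A h i j * (p i * l j)) := by
    intro i
    rw [Finset.sum_comm]
    simp only [mul_assoc]
  rw [Finset.sum_congr rfl (fun i _ => this i), Finset.sum_comm]

/-- There are universal constants `C, C' > 0` such that the meta MWU algorithm
over `M = 2⌈log₂ d⌉` kernelized-MWU base learners (base learner `h` runs MWU with prior `π` and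
learning rate `η_h = √(2^h/T)` over `Φ_b`; the meta learner runs MWU with learning rate
`√(log M / T)` over the base learners; the played `p_t` is a stationary distribution of the
weighted average matrix) guarantees, for all `d ≥ 2`, `T ≥ 1` and losses in `[0,1]^d`,
`Reg(φ) ≤ C (√(T·KL(q,π)) + √(T(1 + log(1 + log d))))` for every row-stochastic `φ` and every
`q ∈ Q_φ`, and `Reg(φ) ≤ C' (√((1 + c_φ log d) T) + √(T(1 + log(1 + log d))))` for every
row-stochastic `φ`. -/
theorem stmt10 :
    ∃ C > (0 : ℝ), ∃ C' > (0 : ℝ),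
      ∀ (d T : ℕ), 2 ≤ d → 1 ≤ T →
      ∀ (ℓ p : ℕ → Fin d → ℝ) (qB : ℕ → ℕ → (Fin d → Fin d) → ℝ) (w : ℕ → ℕ → ℝ),
        (∀ t ∈ Finset.Icc 1 T, ∀ i, 0 ≤ ℓ t i ∧ ℓ t i ≤ 1) →
        (∀ t ∈ Finset.Icc 1 T, InSimplex d (p t)) →
        -- base learners: MWU over `Φ_b` with prior `π` and learning rate `η_h = √(2^h/T)`
        (∀ h ∈ Finset.Icc 1 (2 * Nat.clog 2 d), ∀ f, qB h 1 f = priorPi d (toMat d f)) →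
        (∀ h ∈ Finset.Icc 1 (2 * Nat.clog 2 d), ∀ t ∈ Finset.Icc 1 T, ∀ f,
          qB h (t + 1) f =
            qB h t f *
                Real.exp (-Real.sqrt ((2 : ℝ) ^ h / (T : ℝ)) *
                  lossInner (toMat d f) (p t) (ℓ t)) /
              ∑ g, qB h t g *
                Real.exp (-Real.sqrt ((2 : ℝ) ^ h / (T : ℝ)) *
                  lossInner (toMat d g) (p t) (ℓ t))) →
        -- meta learner: MWU over the base learners with uniform prior and rate `√(log M / T)`
        (∀ h ∈ Finset.Icc 1 (2 * Nat.clog 2 d), w 1 h = 1 / (2 * Nat.clog 2 d : ℝ)) →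
        (∀ t ∈ Finset.Icc 1 T, ∀ h ∈ Finset.Icc 1 (2 * Nat.clog 2 d),
          w (t + 1) h =
            w t h *
                Real.exp (-Real.sqrt (Real.log (2 * Nat.clog 2 d : ℝ) / (T : ℝ)) *
                  lossInner (mixMat d (qB h t)) (p t) (ℓ t)) /
              ∑ h' ∈ Finset.Icc 1 (2 * Nat.clog 2 d), w t h' *
                Real.exp (-Real.sqrt (Real.log (2 * Nat.clog 2 d : ℝ) / (T : ℝ)) *
                  lossInner (mixMat d (qB h' t)) (p t) (ℓ t))) →
        -- `p_t` is a stationary distribution of `φ_t = Σ_h w_{t,h} φ_t^h`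
        (∀ t ∈ Finset.Icc 1 T, ∀ i,
          p t i = ∑ j, (∑ h ∈ Finset.Icc 1 (2 * Nat.clog 2 d),
            w t h * mixMat d (qB h t) j i) * p t j) →
        (∀ φ : Matrix (Fin d) (Fin d) ℝ, RowStochastic φ → ∀ q ∈ QSet d φ,
          (∑ t ∈ Finset.Icc 1 T, ∑ i, (p t i - ∑ j, φ j i * p t j) * ℓ t i) ≤
            C * (Real.sqrt ((T : ℝ) * klPrior d q) +
              Real.sqrt ((T : ℝ) * (1 + Real.log (1 + Real.log d))))) ∧
        (∀ φ : Matrix (Fin d) (Fin d) ℝ, RowStochastic φ →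
          (∑ t ∈ Finset.Icc 1 T, ∑ i, (p t i - ∑ j, φ j i * p t j) * ℓ t i) ≤
            C' * (Real.sqrt ((1 + cGen d φ * Real.log d) * (T : ℝ)) +
              Real.sqrt ((T : ℝ) * (1 + Real.log (1 + Real.log d))))) := by
  refine ⟨6, by norm_num, 12, by norm_num, ?_⟩
  intro d T hd hT ℓ p qB w hℓ hp hq1 hqup hw1 hwup hstat
  have h2 : (2 : ℝ) ≤ d := by exact_mod_cast hd
  have hTr : (1:ℝ) ≤ T := by exact_mod_cast hT
  have hld : 0 ≤ Real.log d := Real.log_nonneg (by linarith)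
  have hll : 0 ≤ Real.log (1 + Real.log d) := Real.log_nonneg (by linarith)
  have hc : 1 ≤ Nat.clog 2 d := Nat.clog_pos (by norm_num) hd
  obtain ⟨hLM0, hLM⟩ := logM d hd
  have hcr : (1:ℝ) ≤ Nat.clog 2 d := by exact_mod_cast hc
  have hne : (Finset.univ : Finset (Fin d → Fin d)).Nonempty := ⟨id, Finset.mem_univ _⟩
  have hbase1 : ∀ h ∈ Finset.Icc 1 (2 * Nat.clog 2 d), ∀ f ∈ (Finset.univ : Finset (Fin d → Fin d)),
      0 < qB h 1 f := fun h hh f _ => by rw [hq1 h hh f]; exact prior_pos d hd f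
  have hbaseS : ∀ h ∈ Finset.Icc 1 (2 * Nat.clog 2 d), ∑ f, qB h 1 f = 1 := fun h hh => by
    rw [Finset.sum_congr rfl (fun f _ => hq1 h hh f)]; exact prior_sum d hd
  have hη : ∀ h : ℕ, 0 < Real.sqrt ((2 : ℝ) ^ h / (T : ℝ)) := fun h =>
    Real.sqrt_pos.2 (by positivity)
  have hLb : ∀ t ∈ Finset.Icc 1 T, ∀ f ∈ (Finset.univ : Finset (Fin d → Fin d)),
      0 ≤ lossInner (toMat d f) (p t) (ℓ t) ∧ lossInner (toMat d f) (p t) (ℓ t) ≤ 1 :=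
    fun t ht f _ => lossInner_bd d f _ _ (hp t ht) (hℓ t ht)
  have hqdist : ∀ h ∈ Finset.Icc 1 (2 * Nat.clog 2 d), ∀ t ∈ Finset.Icc 1 T,
      (∀ f, 0 ≤ qB h t f) ∧ ∑ f, qB h t f = 1 := by
    intro h hh t ht
    rw [Finset.mem_Icc] at ht
    have := mwu_core Finset.univ hne T _ (hη h) (qB h)
      (fun t f => lossInner (toMat d f) (p t) (ℓ t)) hLb (hbase1 h hh) (hbaseS h hh)
      (fun t ht f _ => hqup h hh t ht f) (t - 1) (by omega)
    rw [Nat.sub_add_cancel ht.1] at this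
    exact ⟨fun f => (this.1 f (Finset.mem_univ f)).le, this.2.1⟩
  have main : ∀ φ : Matrix (Fin d) (Fin d) ℝ, RowStochastic φ → ∀ q ∈ QSet d φ,
      (∑ t ∈ Finset.Icc 1 T, ∑ i, (p t i - ∑ j, φ j i * p t j) * ℓ t i) ≤
        6 * (Real.sqrt ((T : ℝ) * klPrior d q) +
          Real.sqrt ((T : ℝ) * (1 + Real.log (1 + Real.log d)))) := by
    intro φ _ q hq
    obtain ⟨hq0, hqs, hqm⟩ := hq
    have hφ : φ = mixMat d q := by ext i j; exact (hqm i j).symm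
    obtain ⟨h, hh, htune⟩ := tune (klPrior d q) T (2 * Nat.clog 2 d) hT (by omega)
      (kl_le_big d hd q hq0 hqs)
    have hmeta := mwu_point (Finset.Icc 1 (2 * Nat.clog 2 d)) ⟨h, hh⟩ T
      (Real.sqrt (Real.log (2 * Nat.clog 2 d : ℝ) / (T : ℝ)))
      (Real.sqrt_pos.2 (by positivity)) w
      (fun t h => lossInner (mixMat d (qB h t)) (p t) (ℓ t))
      (fun t ht h hh => lossInner_mix_bd d _ _ _ (hp t ht) (hℓ t ht) (hqdist h hh t ht).1
        (hqdist h hh t ht).2)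
      (fun h hh => by rw [hw1 h hh]; positivity)
      (by rw [Finset.sum_congr rfl hw1]; simp; field_simp)
      hwup h hh
    have hbase := mwu_kl Finset.univ hne T _ (hη h) (qB h)
      (fun t f => lossInner (toMat d f) (p t) (ℓ t)) hLb (hbase1 h hh) (hbaseS h hh)
      (fun t ht f _ => hqup h hh t ht f) q (fun f _ => hq0 f) hqs
    have hkl : ∑ f, q f * Real.log (q f / qB h 1 f) = klPrior d q := by
      unfold klPrior
      exact Finset.sum_congr rfl fun f _ => by rw [hq1 h hh f]
    rw [hkl] at hbase
    have hreg : (∑ t ∈ Finset.Icc 1 T, ∑ i, (p t i - ∑ j, φ j i * p t j) * ℓ t i) =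
        (∑ t ∈ Finset.Icc 1 T, (∑ h' ∈ Finset.Icc 1 (2 * Nat.clog 2 d),
          w t h' * lossInner (mixMat d (qB h' t)) (p t) (ℓ t)
            - lossInner (mixMat d (qB h t)) (p t) (ℓ t))) +
        ∑ t ∈ Finset.Icc 1 T, (∑ f, qB h t f * lossInner (toMat d f) (p t) (ℓ t)
          - ∑ f, q f * lossInner (toMat d f) (p t) (ℓ t)) := by
      rw [← Finset.sum_add_distrib]
      refine Finset.sum_congr rfl fun t ht => ?_
      rw [← lossInner_mix, ← lossInner_mix, ← hφ, ← lossInner_sum, ← apply_eq_lossInner d φ,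
        ← apply_eq_lossInner d (fun j i => _), ← Finset.sum_congr rfl
          (fun i _ => congrArg (· * ℓ t i) (hstat t ht i))]
      simp only [sub_mul, Finset.sum_sub_distrib]
      ring
    rw [hreg]
    set LM := Real.log (2 * Nat.clog 2 d : ℝ) with hLMdef
    have hw : - Real.log (w 1 h) = LM := by
      rw [hw1 h hh, one_div, Real.log_inv, neg_neg]
    rw [hw] at hmeta
    have hT0 : 0 < Real.sqrt T := Real.sqrt_pos.2 (by linarith)
    have hss : Real.sqrt T * Real.sqrt T = T := Real.mul_self_sqrt (by linarith)
    have hL0 : 0 < Real.sqrt LM := Real.sqrt_pos.2 hLM0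
    have hLL : Real.sqrt LM * Real.sqrt LM = LM := Real.mul_self_sqrt hLM0.le
    have hm : LM / Real.sqrt (LM / T) + Real.sqrt (LM / T) * T / 2 =
        3 / 2 * (Real.sqrt T * Real.sqrt LM) := by
      rw [Real.sqrt_div hLM0.le]
      have e1 : LM / (Real.sqrt LM / Real.sqrt T) = Real.sqrt T * Real.sqrt LM := by
        rw [div_eq_iff (by positivity)]
        field_simp
        nlinarith
      have e2 : Real.sqrt LM / Real.sqrt T * T = Real.sqrt T * Real.sqrt LM := by
        rw [div_mul_eq_mul_div, div_eq_iff hT0.ne']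
        nlinarith
      rw [e1, e2]; ring
    rw [hm] at hmeta
    set B := Real.sqrt (1 + Real.log (1 + Real.log d)) with hB
    have hsB : Real.sqrt ((T : ℝ) * (1 + Real.log (1 + Real.log d))) = Real.sqrt T * B :=
      Real.sqrt_mul (by linarith) _
    have hB1 : 1 ≤ B := Real.one_le_sqrt.2 (by linarith)
    have hLB : Real.sqrt LM ≤ 2 * B := by
      rw [Real.sqrt_le_iff]
      refine ⟨by positivity, ?_⟩
      rw [mul_pow, hB, Real.sq_sqrt (by linarith)]; linarith
    rw [hsB]
    have f1 : Real.sqrt T * Real.sqrt LM ≤ 2 * (Real.sqrt T * B) := by nlinarith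
    have f2 : Real.sqrt T ≤ Real.sqrt T * B := by nlinarith
    have f3 := Real.sqrt_nonneg ((T : ℝ) * klPrior d q)
    linarith
  refine ⟨main, ?_⟩
  intro φ hφ
  obtain ⟨q0, hq0⟩ := QSet_nonempty d φ hφ
  set R := ∑ t ∈ Finset.Icc 1 T, ∑ i, (p t i - ∑ j, φ j i * p t j) * ℓ t i with hR
  have hclosed : IsClosed {x : ℝ | R ≤ 12 * (Real.sqrt ((1 + x * Real.log d) * (T : ℝ)) +
              Real.sqrt ((T : ℝ) * (1 + Real.log (1 + Real.log d))))} :=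
    isClosed_le continuous_const (by fun_prop)
  have hmem : cGen d φ ∈ closure ((fun q => ∑ f : Fin d → Fin d, q f * (cB (toMat d f) : ℝ)) '' QSet d φ) := by
    refine csInf_mem_closure ⟨_, q0, hq0, rfl⟩ ⟨0, ?_⟩
    rintro _ ⟨q, hq, rfl⟩
    exact Finset.sum_nonneg fun f _ => mul_nonneg (hq.1 f) (Nat.cast_nonneg _)
  refine closure_minimal ?_ hclosed hmem
  rintro _ ⟨q, hq, rfl⟩
  have hm := main φ hφ q hq
  have hk := kl_le d hd q hq.1 hq.2.1
  have hx : 0 ≤ ∑ f : Fin d → Fin d, q f * (cB (toMat d f) : ℝ) :=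
    Finset.sum_nonneg fun f _ => mul_nonneg (hq.1 f) (Nat.cast_nonneg _)
  show R ≤ 12 * (Real.sqrt ((1 + (∑ f : Fin d → Fin d, q f * (cB (toMat d f) : ℝ)) * Real.log d) * (T : ℝ)) + _)
  set x := ∑ f : Fin d → Fin d, q f * (cB (toMat d f) : ℝ) with hxdef
  have hxl : 0 ≤ x * Real.log d := mul_nonneg hx hld
  have hs : Real.sqrt ((T : ℝ) * klPrior d q) ≤ 2 * Real.sqrt ((1 + x * Real.log d) * (T : ℝ)) := by
    rw [Real.sqrt_le_iff]
    refine ⟨by positivity, ?_⟩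
    rw [mul_pow, Real.sq_sqrt (by positivity)]
    have : klPrior d q ≤ 4 * (1 + x * Real.log d) := by linarith
    nlinarith
  have := Real.sqrt_nonneg ((T : ℝ) * (1 + Real.log (1 + Real.log d)))
  linarith
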